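/- If an ellipsoid E ⊆ ℝ^m ⊗ ℝ^n is a tensorial body (i.e. Q₁ ⊗_π Q₂ ⊆ E ⊆ Q₁ ⊗_ε Q₂ for some 0-symmetric convex bodies Q₁ ⊆ ℝ^m, Q₂ ⊆ ℝ^n), then there exist linear isomorphisms T₁ : ℝ^m → ℝ^m and T₂ : ℝ^n → ℝ^n such that E = (T₁ ⊗ T₂)(B₂^{m,n}). -/

import Mathlib

open Set

/-- Outer product of two vectors, as an `m × n` matrix. -/
def outer {m n : ℕ} (x : Fin m → ℝ) (y : Fin n → ℝ) : Matrix (Fin m) (Fin n) ℝ :=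
  fun i j => x i * y j

/-- Hilbert–Schmidt (Frobenius) inner product on matrices. -/
def hsInner {m n : ℕ} (A B : Matrix (Fin m) (Fin n) ℝ) : ℝ := ∑ i, ∑ j, A i j * B i j

/-- Polar of a set of matrices w.r.t. the Hilbert–Schmidt inner product. -/
def polar {m n : ℕ} (C : Set (Matrix (Fin m) (Fin n) ℝ)) : Set (Matrix (Fin m) (Fin n) ℝ) :=
  {z | ∀ u ∈ C, |hsInner u z| ≤ 1}

/-- Polar of a set of vectors w.r.t. the standard inner product. -/
def polarVec {d : ℕ} (C : Set (Fin d → ℝ)) : Set (Fin d → ℝ) :=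
  {z | ∀ u ∈ C, |∑ i, u i * z i| ≤ 1}

/-- A 0-symmetric convex body: compact, convex, nonempty interior, symmetric. -/
def IsSymCB {E : Type*} [AddCommGroup E] [Module ℝ E] [TopologicalSpace E] (Q : Set E) : Prop :=
  IsCompact Q ∧ Convex ℝ Q ∧ (interior Q).Nonempty ∧ Q = -Q

/-- Projective tensor product of convex bodies. -/
def projTP {m n : ℕ} (Q₁ : Set (Fin m → ℝ)) (Q₂ : Set (Fin n → ℝ)) :
    Set (Matrix (Fin m) (Fin n) ℝ) :=
  convexHull ℝ {M | ∃ x ∈ Q₁, ∃ y ∈ Q₂, M = outer x y}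

/-- Injective tensor product of convex bodies. -/
def injTP {m n : ℕ} (Q₁ : Set (Fin m → ℝ)) (Q₂ : Set (Fin n → ℝ)) :
    Set (Matrix (Fin m) (Fin n) ℝ) :=
  polar (projTP (polarVec Q₁) (polarVec Q₂))

/-- A linear map on the matrix space, given by a big matrix indexed by pairs. -/
def act {m n : ℕ} (T : Matrix (Fin m × Fin n) (Fin m × Fin n) ℝ)
    (A : Matrix (Fin m) (Fin n) ℝ) : Matrix (Fin m) (Fin n) ℝ :=
  fun i j => ∑ q, T (i, j) q * A q.1 q.2

/-- The Hilbert–Schmidt unit ball of matrices. -/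
def hsBall (m n : ℕ) : Set (Matrix (Fin m) (Fin n) ℝ) := {A | hsInner A A ≤ 1}

/-- The Euclidean unit ball in ℝ^d. -/
def euclBall (d : ℕ) : Set (Fin d → ℝ) := {x | ∑ i, x i ^ 2 ≤ 1}


/-- The map `A ↦ T₁ A T₂ᵀ`, i.e. the tensor product `T₁ ⊗ T₂` acting on matrices. -/
def tmap {m n : ℕ} (T₁ : Matrix (Fin m) (Fin m) ℝ) (T₂ : Matrix (Fin n) (Fin n) ℝ)
    (A : Matrix (Fin m) (Fin n) ℝ) : Matrix (Fin m) (Fin n) ℝ :=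
  T₁ * A * T₂.transpose

/-!
By Auerbach's lemma, `Q₁` and `Q₂` contain bases whose dual bases lie in the polars. Let `T₁` and
`T₂` have these bases as columns. Then `(T₁ ⊗ T₂)⁻¹ E` is an ellipsoid that contains every matrix
unit `eᵢ ⊗ eⱼ`, because `Q₁ ⊗_π Q₂ ⊆ E`, and all of whose elements have entries of modulus at most
one, because `E ⊆ Q₁ ⊗_ε Q₂`. If it is the image of the unit ball under `S`, and `S r = v` for such
a matrix unit `v` with `‖r‖ ≤ 1`, then `‖S† v‖ ≤ 1` and `⟪S† v, r⟫ = ⟪v, S r⟫ = 1`, so `S† v = r` by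
the equality case of Cauchy–Schwarz. Hence `S S† = 1`, and the ellipsoid is the unit ball.
-/

open scoped InnerProductSpace Kronecker Matrix

lemma exists_basis_forall_mem_of_span_eq_top {ι K V : Type*} [DivisionRing K] [AddCommGroup V]
    [Module K V] (e : Module.Basis ι K V) {s : Set V} (hs : Submodule.span K s = ⊤) :
    ∃ b : Module.Basis ι K V, ∀ i, b i ∈ s := by
  let b := Module.Basis.ofSpan hs.ge
  refine ⟨b.reindex (b.indexEquiv e), fun i => Module.Basis.ofSpan_subset hs.ge ?_⟩
  simp [b]

section Auerbach

variable {ι 𝕜 V : Type*} [NontriviallyNormedField 𝕜] [CompleteSpace 𝕜] [AddCommGroup V] [Module 𝕜 V]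
  [TopologicalSpace V] [IsTopologicalAddGroup V] [ContinuousSMul 𝕜 V] [T2Space V]

lemma continuous_basis_det [Fintype ι] [DecidableEq ι] (e : Module.Basis ι 𝕜 V) :
    Continuous fun v : ι → V => e.det v := by
  have := e.finiteDimensional_of_finite
  simp only [Module.Basis.det_apply]
  refine Continuous.matrix_det (continuous_matrix fun i j => ?_)
  exact (e.coord i).continuous_of_finiteDimensional.comp (continuous_apply j)

/-- **Auerbach's lemma**: a family in `K` of maximal determinant is the required basis, its
coordinates being quotients of determinants by Cramer's rule. -/
theorem exists_basis_mem_norm_repr_le_one [Finite ι] (e : Module.Basis ι 𝕜 V) {K : Set V}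
    (hK : IsCompact K) (hspan : Submodule.span 𝕜 K = ⊤) :
    ∃ b : Module.Basis ι 𝕜 V, (∀ i, b i ∈ K) ∧ ∀ x ∈ K, ∀ i, ‖b.repr x i‖ ≤ 1 := by
  classical
  have := Fintype.ofFinite ι
  obtain ⟨b₀, hb₀⟩ := exists_basis_forall_mem_of_span_eq_top e hspan
  obtain ⟨v, hvK, hmax⟩ := (isCompact_univ_pi fun _ : ι => hK).exists_isMaxOn
    ⟨b₀, fun i _ => hb₀ i⟩ (continuous_basis_det e).norm.continuousOn
  have hpos : 0 < ‖e.det v‖ :=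
    (norm_pos_iff.2 (e.isUnit_det b₀).ne_zero).trans_le (hmax fun i _ => hb₀ i)
  obtain ⟨hli, hsp⟩ := e.is_basis_iff_det.2 (norm_pos_iff.1 hpos).isUnit
  refine ⟨.mk hli hsp.ge, fun i => by simpa using hvK i (mem_univ i), fun x hx i => ?_⟩
  have hcramer : e.det v * (Module.Basis.mk hli hsp.ge).repr x i = e.det (Function.update v i x) :=
    LinearMap.congr_fun (e.det_smul_mk_coord_eq_det_update hli hsp.ge i) x
  have hle : ‖e.det (Function.update v i x)‖ ≤ ‖e.det v‖ :=
    hmax ((update_mem_pi_iff_of_mem hvK).2 fun _ => hx)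
  rw [← hcramer, norm_mul] at hle
  exact le_of_mul_le_mul_left (by simpa using hle) hpos

end Auerbach

lemma exists_mul_eq_one_col_mem_row_mem_polarVec {d : ℕ} {Q : Set (Fin d → ℝ)} (hQ : IsCompact Q)
    (hspan : Submodule.span ℝ Q = ⊤) :
    ∃ T S : Matrix (Fin d) (Fin d) ℝ,
      T * S = 1 ∧ (∀ i, T.col i ∈ Q) ∧ ∀ i, S.row i ∈ polarVec Q := by
  let e := Pi.basisFun ℝ (Fin d)
  obtain ⟨b, hbQ, hb⟩ := exists_basis_mem_norm_repr_le_one e hQ hspan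
  refine ⟨e.toMatrix b, b.toMatrix e, e.toMatrix_mul_toMatrix_flip b, hbQ, fun i u hu => ?_⟩
  have hrepr : ∑ k, u k * (b.toMatrix e).row i k = b.repr u i :=
    (dotProduct_comm u _).trans (congrFun (e.toMatrix_mulVec_repr b u) i)
  exact hrepr ▸ hb u hu i

lemma span_eq_top_of_interior_nonempty {E : Type*} [AddCommGroup E] [Module ℝ E]
    [TopologicalSpace E] [ContinuousAdd E] [ContinuousSMul ℝ E] {s : Set E}
    (hs : (interior s).Nonempty) : Submodule.span ℝ s = ⊤ :=
  Submodule.eq_top_of_nonempty_interior' _ (hs.mono (interior_mono Submodule.subset_span))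

section UnitBall

variable {𝕜 V W : Type*} [RCLike 𝕜] [NormedAddCommGroup V] [InnerProductSpace 𝕜 V]
  [NormedAddCommGroup W] [InnerProductSpace 𝕜 W]

lemma eq_of_norm_le_one_of_inner_eq_one {x y : V} (hx : ‖x‖ ≤ 1) (hy : ‖y‖ ≤ 1)
    (hxy : ⟪x, y⟫_𝕜 = 1) : x = y := by
  have hprod : 1 ≤ ‖x‖ * ‖y‖ := by simpa [hxy] using norm_inner_le_norm (𝕜 := 𝕜) x y
  have hx1 : ‖x‖ = 1 := by nlinarith [norm_nonneg x]
  have hy1 : ‖y‖ = 1 := by nlinarith [norm_nonneg y]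
  exact (inner_eq_one_iff_of_norm_eq_one hx1 hy1).1 hxy

variable [CompleteSpace V] [CompleteSpace W] {S : V →L[𝕜] W}

lemma image_closedBall_of_comp_adjoint_eq_id (hS : S ∘L S.adjoint = .id 𝕜 W) (r : ℝ) :
    S '' Metric.closedBall 0 r = Metric.closedBall 0 r := by
  have hSadj (y : W) : S (S.adjoint y) = y := DFunLike.congr_fun hS y
  have hnorm_adj (y : W) : ‖S.adjoint y‖ = ‖y‖ := by
    rw [← sq_eq_sq₀ (norm_nonneg _) (norm_nonneg _),
      S.adjoint.apply_norm_sq_eq_inner_adjoint_left, ContinuousLinearMap.adjoint_adjoint,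
      ContinuousLinearMap.comp_apply, hSadj, inner_self_eq_norm_sq]
  have hnorm : ‖S‖ ≤ 1 := by
    rw [← ContinuousLinearMap.adjoint.norm_map S]
    exact ContinuousLinearMap.opNorm_le_bound _ zero_le_one fun y => by rw [hnorm_adj, one_mul]
  refine Subset.antisymm (image_subset_iff.2 fun x hx => ?_) fun y hy => ?_
  · rw [mem_closedBall_zero_iff] at hx
    simpa using (S.le_of_opNorm_le hnorm x).trans (by simpa using hx)
  · rw [mem_closedBall_zero_iff] at hy
    exact ⟨S.adjoint y, by simpa [hnorm_adj] using hy, hSadj y⟩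

lemma norm_adjoint_apply_le_one {v : W}
    (hv : ∀ y ∈ S '' Metric.closedBall 0 1, ‖⟪v, y⟫_𝕜‖ ≤ 1) : ‖S.adjoint v‖ ≤ 1 := by
  rw [← innerSL_apply_norm 𝕜]
  refine ContinuousLinearMap.opNorm_le_of_unit_norm zero_le_one fun x hx => ?_
  rw [innerSL_apply_apply, ContinuousLinearMap.adjoint_inner_left]
  exact hv _ (mem_image_of_mem S (by simp [hx]))

/-- An ellipsoid that touches the unit sphere at spanning points, with the tangent hyperplanes of
the sphere as supporting hyperplanes there, is the unit ball. -/
theorem image_closedBall_eq_of_forall_mem_of_forall_inner_le {ι : Type*} {v : ι → W}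
    (hv : ∀ i, ‖v i‖ = 1) (hspan : Dense (Submodule.span 𝕜 (range v) : Set W))
    (hmem : ∀ i, v i ∈ S '' Metric.closedBall 0 1)
    (hslab : ∀ i, ∀ y ∈ S '' Metric.closedBall 0 1, ‖⟪v i, y⟫_𝕜‖ ≤ 1) :
    S '' Metric.closedBall 0 1 = Metric.closedBall 0 1 := by
  refine image_closedBall_of_comp_adjoint_eq_id (ContinuousLinearMap.ext_on hspan ?_) 1
  rintro _ ⟨i, rfl⟩
  obtain ⟨r, hr, hSr⟩ := hmem i
  have hinner : ⟪S.adjoint (v i), r⟫_𝕜 = 1 := by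
    rw [ContinuousLinearMap.adjoint_inner_left, hSr, inner_self_eq_norm_sq_to_K, hv]
    simp
  have hadj : S.adjoint (v i) = r := eq_of_norm_le_one_of_inner_eq_one
    (norm_adjoint_apply_le_one (hslab i)) (mem_closedBall_zero_iff.1 hr) hinner
  simp [hadj, hSr]

end UnitBall

section HilbertSchmidt

variable {m n : ℕ}

/-- The Hilbert–Schmidt space of `m × n` matrices, identified with the Euclidean space of their
entries. The type `Matrix` carries no global norm, so inner product arguments are carried out
there. -/
def hsEquiv (m n : ℕ) : Matrix (Fin m) (Fin n) ℝ ≃ₗ[ℝ] EuclideanSpace ℝ (Fin m × Fin n) :=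
  (Matrix.ofLinearEquiv ℝ).symm ≪≫ₗ (LinearEquiv.curry ℝ ℝ (Fin m) (Fin n)).symm ≪≫ₗ
    (WithLp.linearEquiv 2 ℝ (Fin m × Fin n → ℝ)).symm

lemma hsEquiv_apply (A : Matrix (Fin m) (Fin n) ℝ) (q : Fin m × Fin n) :
    hsEquiv m n A q = A q.1 q.2 := rfl

lemma hsEquiv_single (q : Fin m × Fin n) :
    hsEquiv m n (Matrix.single q.1 q.2 1) = EuclideanSpace.basisFun (Fin m × Fin n) ℝ q := by
  ext p
  simp [hsEquiv_apply, Matrix.single_apply, Prod.ext_iff, eq_comm]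

lemma hsEquiv_image_hsBall : hsEquiv m n '' hsBall m n = Metric.closedBall 0 1 := by
  ext x
  obtain ⟨A, rfl⟩ := (hsEquiv m n).surjective x
  rw [(hsEquiv m n).injective.mem_set_image, mem_closedBall_zero_iff,
    ← sq_le_one_iff₀ (norm_nonneg _), EuclideanSpace.real_norm_sq_eq]
  simp only [hsBall, hsInner, mem_ofPred_eq, hsEquiv_apply, Fintype.sum_prod_type, sq]

lemma hsEquiv_image_act_image_hsBall (S : Matrix (Fin m × Fin n) (Fin m × Fin n) ℝ) :
    hsEquiv m n '' (act S '' hsBall m n) =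
      Matrix.toEuclideanCLM (𝕜 := ℝ) S '' Metric.closedBall 0 1 := by
  rw [← hsEquiv_image_hsBall, image_image, image_image]
  rfl

lemma act_image_hsBall_eq_hsBall {S : Matrix (Fin m × Fin n) (Fin m × Fin n) ℝ}
    (hmem : ∀ i j, Matrix.single i j 1 ∈ act S '' hsBall m n)
    (hle : ∀ A ∈ act S '' hsBall m n, ∀ i j, |A i j| ≤ 1) : act S '' hsBall m n = hsBall m n := by
  let b := EuclideanSpace.basisFun (Fin m × Fin n) ℝ
  apply (hsEquiv m n).injective.image_injective
  rw [hsEquiv_image_hsBall, hsEquiv_image_act_image_hsBall]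
  refine image_closedBall_eq_of_forall_mem_of_forall_inner_le (𝕜 := ℝ) (v := b) b.norm_eq_one
    ?_ (fun q => ?_) fun q => ?_
  · rw [← b.coe_toBasis, b.toBasis.span_eq]
    exact dense_univ
  · rw [← hsEquiv_image_act_image_hsBall, ← hsEquiv_single]
    exact mem_image_of_mem _ (hmem q.1 q.2)
  · rw [← hsEquiv_image_act_image_hsBall, forall_mem_image]
    intro A hA
    simpa [b, EuclideanSpace.inner_single_left, hsEquiv_apply] using hle A hA q.1 q.2

lemma act_mul (S T : Matrix (Fin m × Fin n) (Fin m × Fin n) ℝ) : act (S * T) = act S ∘ act T := by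
  ext A i j
  exact congrFun (Matrix.mulVec_mulVec (Function.uncurry A) S T).symm (i, j)

end HilbertSchmidt

section TensorMap

variable {m n : ℕ} (T₁ : Matrix (Fin m) (Fin m) ℝ) (T₂ : Matrix (Fin n) (Fin n) ℝ)

lemma act_kronecker : act (T₁ ⊗ₖ T₂) = tmap T₁ T₂ := by
  ext A i j
  simp only [act, tmap, Matrix.mul_apply, Matrix.kronecker_apply, Matrix.transpose_apply,
    Fintype.sum_prod_type_right, Finset.sum_mul]
  exact Finset.sum_congr rfl fun _ _ => Finset.sum_congr rfl fun _ _ => by ring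

lemma tmap_single (i : Fin m) (j : Fin n) :
    tmap T₁ T₂ (Matrix.single i j 1) = outer (T₁.col i) (T₂.col j) := by
  ext k l
  simp [tmap, outer, Matrix.mul_apply, Matrix.single_apply, ite_and]

lemma tmap_apply_eq_hsInner (A : Matrix (Fin m) (Fin n) ℝ) (i : Fin m) (j : Fin n) :
    tmap T₁ T₂ A i j = hsInner (outer (T₁.row i) (T₂.row j)) A := by
  simp only [← act_kronecker, act, hsInner, Fintype.sum_prod_type]
  rfl

variable {T₁ T₂} in
lemma tmap_leftInverse {S₁ : Matrix (Fin m) (Fin m) ℝ} {S₂ : Matrix (Fin n) (Fin n) ℝ}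
    (h₁ : S₁ * T₁ = 1) (h₂ : S₂ * T₂ = 1) : Function.LeftInverse (tmap S₁ S₂) (tmap T₁ T₂) := by
  intro A
  simp only [tmap]
  rw [Matrix.mul_assoc, Matrix.mul_assoc, ← Matrix.transpose_mul, ← Matrix.mul_assoc,
    ← Matrix.mul_assoc, h₁, h₂, Matrix.one_mul, Matrix.transpose_one, Matrix.mul_one]

end TensorMap

section TensorProduct

variable {m n : ℕ} {Q₁ : Set (Fin m → ℝ)} {Q₂ : Set (Fin n → ℝ)} {x : Fin m → ℝ} {y : Fin n → ℝ}

lemma outer_mem_projTP (hx : x ∈ Q₁) (hy : y ∈ Q₂) : outer x y ∈ projTP Q₁ Q₂ :=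
  subset_convexHull ℝ _ ⟨x, hx, y, hy, rfl⟩

lemma abs_hsInner_outer_le_one_of_mem_injTP {A : Matrix (Fin m) (Fin n) ℝ} (hA : A ∈ injTP Q₁ Q₂)
    (hx : x ∈ polarVec Q₁) (hy : y ∈ polarVec Q₂) : |hsInner (outer x y) A| ≤ 1 :=
  hA _ (outer_mem_projTP hx hy)

theorem tensorial_ellipsoid_is_hilbertian_general
    (T : Matrix (Fin m × Fin n) (Fin m × Fin n) ℝ)
    (hQ₁ : IsCompact Q₁) (hspan₁ : Submodule.span ℝ Q₁ = ⊤)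
    (hQ₂ : IsCompact Q₂) (hspan₂ : Submodule.span ℝ Q₂ = ⊤)
    (hproj : projTP Q₁ Q₂ ⊆ act T '' hsBall m n) (hinj : act T '' hsBall m n ⊆ injTP Q₁ Q₂) :
    ∃ (T₁ : Matrix (Fin m) (Fin m) ℝ) (T₂ : Matrix (Fin n) (Fin n) ℝ),
      IsUnit T₁ ∧ IsUnit T₂ ∧ act T '' hsBall m n = tmap T₁ T₂ '' hsBall m n := by
  obtain ⟨T₁, S₁, hTS₁, hT₁, hS₁⟩ := exists_mul_eq_one_col_mem_row_mem_polarVec hQ₁ hspan₁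
  obtain ⟨T₂, S₂, hTS₂, hT₂, hS₂⟩ := exists_mul_eq_one_col_mem_row_mem_polarVec hQ₂ hspan₂
  have hact : act (S₁ ⊗ₖ S₂ * T) '' hsBall m n = tmap S₁ S₂ '' (act T '' hsBall m n) := by
    rw [act_mul, act_kronecker, image_comp]
  have hball : tmap S₁ S₂ '' (act T '' hsBall m n) = hsBall m n := by
    rw [← hact]
    apply act_image_hsBall_eq_hsBall <;> rw [hact]
    · intro i j
      exact ⟨_, hproj (outer_mem_projTP (hT₁ i) (hT₂ j)), by
        rw [← tmap_single, tmap_leftInverse (mul_eq_one_comm.1 hTS₁) (mul_eq_one_comm.1 hTS₂)]⟩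
    · rintro _ ⟨A, hA, rfl⟩ i j
      rw [tmap_apply_eq_hsInner]
      exact abs_hsInner_outer_le_one_of_mem_injTP (hinj hA) (hS₁ i) (hS₂ j)
  refine ⟨T₁, T₂, .of_mul_eq_one _ hTS₁, .of_mul_eq_one _ hTS₂, ?_⟩
  rw [← (tmap_leftInverse hTS₁ hTS₂).image_image (act T '' hsBall m n), hball]

end TensorProduct

theorem tensorial_ellipsoid_is_hilbertian (m n : ℕ)
    (E : Set (Matrix (Fin m) (Fin n) ℝ))
    (hell : ∃ T : Matrix (Fin m × Fin n) (Fin m × Fin n) ℝ, IsUnit T ∧ E = act T '' hsBall m n)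
    (htens : ∃ (Q₁ : Set (Fin m → ℝ)) (Q₂ : Set (Fin n → ℝ)), IsSymCB Q₁ ∧ IsSymCB Q₂ ∧
      projTP Q₁ Q₂ ⊆ E ∧ E ⊆ injTP Q₁ Q₂) :
    ∃ (T₁ : Matrix (Fin m) (Fin m) ℝ) (T₂ : Matrix (Fin n) (Fin n) ℝ),
      IsUnit T₁ ∧ IsUnit T₂ ∧ E = tmap T₁ T₂ '' hsBall m n := by
  obtain ⟨T, -, rfl⟩ := hell
  obtain ⟨Q₁, Q₂, ⟨hQ₁, -, hint₁, -⟩, ⟨hQ₂, -, hint₂, -⟩, hproj, hinj⟩ := htens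
  exact tensorial_ellipsoid_is_hilbertian_general T hQ₁ (span_eq_top_of_interior_nonempty hint₁)
    hQ₂ (span_eq_top_of_interior_nonempty hint₂) hproj hinj
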